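/- The Lyapunov exponent satisfies the lower bound γ(E) ≥ max{ ln λ − ln( 2e / ((1 − ρ(α)) γ₋) ), 0 } for every E ∈ ℝ; in particular γ(E) is uniformly positive in E once λ > 2e / ((1 − ρ(α)) γ₋). -/

import Mathlib

/-!
The bound holds for every single `n ≥ 1`, already without the factor `1 - ρ(α)`; since
`0 ≤ ρ(α) ≤ 1/2`, that factor only weakens it. Write `c = λ γ₋` and let `H_n(x)` be the `n × n`
Jacobi matrix with diagonal `λ v(x + lα)` and off-diagonal entries `1`.

* The upper left entry of `M_n(x, E)` is `det (E - H_n(x))` (`transferMat_entries`), so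
  `ln ‖M_n(x, E)‖ ≥ ∑_j ln |E - λ_j(x)|`, with `λ_j(x)` the eigenvalues of `H_n(x)`.
* Let `N(x, E)` be the number of eigenvalues of `H_n(x)` below `E`. For `0 ≤ ε ≤ 1`, the shift
  `x ↦ x + ε` raises every diagonal entry by at least `cε`, except those for which `x + lα` crosses
  an integer. The variational principle (`cnt_le_cnt_add`) then gives
  `N(x + ε, E + cε) ≤ N(x, E) + #{crossings}`. Integrating over a period, where the number of
  crossings has mean `nε`, yields the Wegner-type estimate
  `∫₀¹ (N(x, E + cε) - N(x, E)) dx ≤ nε` (`integral_cnt_sub_le`).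
* With `R = c / 2`, one has `ln |s| ≥ ln R - ∫₀^R 1_{[-t, t)}(s) dt / t`. Summing over the
  eigenvalues and integrating in `x` (Tonelli), the previous estimate gives
  `∫₀¹ ln ‖M_n(x, E)‖ dx ≥ n ln R - ∫₀^R (2nt / c) dt / t = n (ln (c / 2) - 1)`
  (`integral_log_matNorm_ge`).

The lower bound by `0` is immediate from `det M_n = 1`.
-/

open MeasureTheory Filter

noncomputable section

/-- Iterates of the Gauss map applied to the fractional part of `α`. -/
noncomputable def gaussIter (α : ℝ) : ℕ → ℝ
  | 0 => Int.fract α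
  | n + 1 => Int.fract (1 / gaussIter α n)

/-- The continued fraction partial quotient `a_{k+1}` of `α`. -/
noncomputable def cfA (α : ℝ) (k : ℕ) : ℕ := (⌊1 / gaussIter α k⌋).toNat

/-- Denominators `q_k` of the continued fraction convergents of `α`. -/
noncomputable def cfDen (α : ℝ) : ℕ → ℕ
  | 0 => 1
  | 1 => cfA α 0
  | k + 2 => cfA α (k + 1) * cfDen α (k + 1) + cfDen α k

/-- `ρ(α) = liminf_{k → ∞} q_{k-1} / q_{k+1}`. -/
noncomputable def cfRho (α : ℝ) : ℝ :=
  Filter.liminf (fun k : ℕ => (cfDen α k : ℝ) / (cfDen α (k + 2) : ℝ)) Filter.atTop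

/-- The `n`-step transfer matrix `M_n(x,E) = ∏_{l=n-1}^{0} [[E - λ v(x + lα), -1],[1, 0]]`. -/
noncomputable def transferMat (lam : ℝ) (v : ℝ → ℝ) (α E x : ℝ) :
    ℕ → Matrix (Fin 2) (Fin 2) ℝ
  | 0 => 1
  | n + 1 => !![E - lam * v (x + (n : ℝ) * α), -1; 1, 0] * transferMat lam v α E x n

/-- A norm on 2×2 real matrices (Frobenius/Hilbert-Schmidt norm). -/
noncomputable def matNorm (M : Matrix (Fin 2) (Fin 2) ℝ) : ℝ :=
  Real.sqrt (∑ i, ∑ j, (M i j) ^ 2)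

/-- The Lyapunov exponent `γ(E) = inf_{n ≥ 1} (1/n) ∫₀¹ ln ‖M_n(x,E)‖ dx`. -/
noncomputable def lyap (lam : ℝ) (v : ℝ → ℝ) (α E : ℝ) : ℝ :=
  ⨅ n : ℕ+, (1 / (n : ℝ)) *
    ∫ x in (0:ℝ)..1, Real.log (matNorm (transferMat lam v α E x (n : ℕ)))

/-! ### Jacobi matrices and their eigenvalue counting function -/

/-- The Jacobi matrix with diagonal `d` and off-diagonal entries `1`. -/
def jac {n : ℕ} (d : Fin n → ℝ) : Matrix (Fin n) (Fin n) ℝ := fun i j =>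
  if i = j then d i else if (i : ℕ) + 1 = j ∨ (j : ℕ) + 1 = i then 1 else 0

theorem jac_isHermitian {n : ℕ} (d : Fin n → ℝ) : (jac d).IsHermitian := by
  ext i j
  simp only [Matrix.conjTranspose_apply, jac, star_trivial]
  by_cases h : i = j
  · simp [h]
  · simp [h, Ne.symm h, or_comm]

theorem jac_add_diagonal {n : ℕ} (d d' : Fin n → ℝ) :
    jac d' = jac d + Matrix.diagonal (d' - d) := by
  ext i j
  by_cases h : i = j
  · simp [h, jac]
  · simp [h, jac]

/-- Continuant recursion: Laplace expansion along the first row, then along the first column of the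
only other nonzero minor. -/
theorem det_jac_succ_succ {n : ℕ} (d : Fin (n + 2) → ℝ) :
    (jac d).det = d 0 * (jac (fun i => d i.succ)).det
      - (jac (fun i => d i.succ.succ)).det := by
  have h1 : (jac d).submatrix Fin.succ (Fin.succAbove 0) = jac (fun i => d i.succ) := by
    ext i j
    simp [jac]
  have h2 : ((jac d).submatrix Fin.succ (Fin.succAbove 1)).det
      = (jac (fun i => d i.succ.succ)).det := by
    rw [Matrix.det_succ_column_zero, Fin.sum_univ_succ]
    have h3 : ((jac d).submatrix Fin.succ (Fin.succAbove 1)).submatrix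
        (Fin.succAbove 0) Fin.succ = jac (fun i => d i.succ.succ) := by
      ext i j
      simp [jac]
    rw [h3, Finset.sum_eq_zero]
    · simp [jac]
    · intro i _
      simp [jac]
  rw [Matrix.det_succ_row_zero, Fin.sum_univ_succ, Fin.sum_univ_succ, Finset.sum_eq_zero, h1]
  · simp only [Fin.succ_zero_eq_one, h2]
    simp [jac]
    ring
  · intro i _
    simp [jac, Fin.ext_iff]

/-- The number of eigenvalues of `jac d` below `t`. -/
def cnt {n : ℕ} (d : Fin n → ℝ) (t : ℝ) : ℕ :=
  (Finset.univ.filter fun j => (jac_isHermitian d).eigenvalues j < t).card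

open scoped InnerProductSpace in
theorem inner_jac_eq_sum {n : ℕ} (d : Fin n → ℝ) (u : EuclideanSpace ℝ (Fin n)) :
    ⟪u, Matrix.toEuclideanLin (jac d) u⟫_ℝ =
      ∑ j, (jac_isHermitian d).eigenvalues j *
        ⟪(jac_isHermitian d).eigenvectorBasis j, u⟫_ℝ ^ 2 := by
  set b := (jac_isHermitian d).eigenvectorBasis with hb
  rw [← b.sum_inner_mul_inner]
  refine Finset.sum_congr rfl fun j _ => ?_
  have hs : (Matrix.toEuclideanLin (jac d)).IsSymmetric :=
    Matrix.isSymmetric_toEuclideanLin_iff.2 (jac_isHermitian d)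
  have hT : Matrix.toEuclideanLin (jac d) (b j) = (jac_isHermitian d).eigenvalues j • b j := by
    ext i
    have := congrFun ((jac_isHermitian d).mulVec_eigenvectorBasis j) i
    simpa [Matrix.toEuclideanLin, hb] using this
  rw [← hs, hT, real_inner_smul_left, real_inner_comm]
  ring

open scoped InnerProductSpace in
theorem inner_jac_sub {n : ℕ} (d d' : Fin n → ℝ) (u : EuclideanSpace ℝ (Fin n)) :
    ⟪u, Matrix.toEuclideanLin (jac d') u⟫_ℝ =
      ⟪u, Matrix.toEuclideanLin (jac d) u⟫_ℝ + ∑ i, (d' i - d i) * u i ^ 2 := by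
  rw [jac_add_diagonal d d', map_add, LinearMap.add_apply, inner_add_right]
  congr 1
  rw [PiLp.inner_apply]
  refine Finset.sum_congr rfl fun i _ => ?_
  simp [Matrix.toEuclideanLin, Matrix.mulVec_diagonal]
  ring

open scoped InnerProductSpace in
/-- Variational comparison: if `jac d - s ≤ jac d' - s'` as quadratic forms on the vectors vanishing
on `J`, then `jac d' - s'` has at most `J.card` more negative eigenvalues than `jac d - s`. -/
theorem cnt_le_cnt_add {n : ℕ} (d d' : Fin n → ℝ) (s s' : ℝ) (J : Finset (Fin n))
    (h : ∀ i, i ∉ J → d i - s ≤ d' i - s') : cnt d' s' ≤ cnt d s + J.card := by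
  by_contra! hlt
  set b := (jac_isHermitian d).eigenvectorBasis with hb
  set b' := (jac_isHermitian d').eigenvectorBasis with hb'
  set μ := (jac_isHermitian d).eigenvalues with hμ
  set μ' := (jac_isHermitian d').eigenvalues with hμ'
  let S : Finset (Fin n) := Finset.univ.filter fun j => μ j < s
  let S' : Finset (Fin n) := Finset.univ.filter fun j => ¬ μ' j < s'
  let Φ : EuclideanSpace ℝ (Fin n) →ₗ[ℝ] (S → ℝ) × (S' → ℝ) × (J → ℝ) :=
    (LinearMap.pi fun j : S => (innerₛₗ ℝ (b j))).prod
      ((LinearMap.pi fun j : S' => (innerₛₗ ℝ (b' j))).prod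
        (LinearMap.pi fun j : J => (innerₛₗ ℝ (EuclideanSpace.single (j : Fin n) (1 : ℝ)))))
  have hcard : cnt d' s' + S'.card = n := by
    have := Finset.card_filter_add_card_filter_not (s := (Finset.univ : Finset (Fin n)))
      (fun j => μ' j < s')
    rw [Finset.card_univ, Fintype.card_fin] at this
    exact this
  have hS : S.card = cnt d s := rfl
  -- A dimension count yields `u ≠ 0` vanishing on `J`, in the span of the eigenvectors of `jac d'`
  -- with eigenvalue below `s'`, and orthogonal to those of `jac d` with eigenvalue below `s`.
  have hker : LinearMap.ker Φ ≠ ⊥ := by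
    apply LinearMap.ker_ne_bot_of_finrank_lt
    simp only [Module.finrank_prod, Module.finrank_fintype_fun_eq_card, Fintype.card_coe,
      finrank_euclideanSpace, Fintype.card_fin]
    omega
  obtain ⟨u, hu, hu0⟩ := (Submodule.ne_bot_iff _).1 hker
  have hu' : Φ u = 0 := hu
  have k1 : ∀ j, μ j < s → ⟪b j, u⟫_ℝ = 0 := fun j hj =>
    congrFun (congrArg Prod.fst hu') ⟨j, by simpa [S] using hj⟩
  have k2 : ∀ j, ¬ μ' j < s' → ⟪b' j, u⟫_ℝ = 0 := fun j hj =>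
    congrFun (congrArg (fun p => p.2.1) hu') ⟨j, by simpa [S'] using hj⟩
  have k3 : ∀ j ∈ J, u j = 0 := fun j hj => by
    have : ⟪EuclideanSpace.single j (1 : ℝ), u⟫_ℝ = 0 :=
      congrFun (congrArg (fun p => p.2.2) hu') ⟨j, hj⟩
    simpa [EuclideanSpace.inner_single_left] using this
  have n1 : ∑ j, ⟪b j, u⟫_ℝ ^ 2 = ‖u‖ ^ 2 := by
    simpa using b.sum_sq_norm_inner_right u
  have n2 : ∑ j, ⟪b' j, u⟫_ℝ ^ 2 = ‖u‖ ^ 2 := by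
    simpa using b'.sum_sq_norm_inner_right u
  have n3 : ∑ j, u j ^ 2 = ‖u‖ ^ 2 := by
    simp [EuclideanSpace.norm_sq_eq]
  have e1 : s * ‖u‖ ^ 2 ≤ ⟪u, Matrix.toEuclideanLin (jac d) u⟫_ℝ := by
    rw [inner_jac_eq_sum, ← n1, Finset.mul_sum]
    refine Finset.sum_le_sum fun j _ => ?_
    by_cases hj : μ j < s
    · simp [k1 j hj, ← hb]
    · exact mul_le_mul_of_nonneg_right (not_lt.1 hj) (sq_nonneg _)
  have e2 : ⟪u, Matrix.toEuclideanLin (jac d') u⟫_ℝ < s' * ‖u‖ ^ 2 := by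
    have hex : ∃ j, ⟪b' j, u⟫_ℝ ≠ 0 := by
      by_contra! hall
      apply hu0
      rw [← norm_eq_zero, ← sq_eq_zero_iff, ← n2]
      simp [hall]
    obtain ⟨j₀, hj₀⟩ := hex
    rw [inner_jac_eq_sum, ← n2, Finset.mul_sum]
    refine Finset.sum_lt_sum (fun j _ => ?_) ⟨j₀, Finset.mem_univ _, ?_⟩
    · by_cases hj : μ' j < s'
      · exact mul_le_mul_of_nonneg_right hj.le (sq_nonneg _)
      · simp [k2 j hj, ← hb']
    · have : μ' j₀ < s' := by
        by_contra hj
        exact hj₀ (k2 _ hj)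
      exact mul_lt_mul_of_pos_right this (by positivity)
  have e3 : (s' - s) * ‖u‖ ^ 2 ≤ ∑ i, (d' i - d i) * u i ^ 2 := by
    rw [← n3, Finset.mul_sum]
    refine Finset.sum_le_sum fun i _ => ?_
    by_cases hi : i ∈ J
    · simp [k3 i hi]
    · exact mul_le_mul_of_nonneg_right (by linarith [h i hi]) (sq_nonneg _)
  have e4 := inner_jac_sub d d' u
  linarith

theorem lowerSemicontinuous_cnt {n : ℕ} :
    LowerSemicontinuous fun p : (Fin n → ℝ) × ℝ => cnt p.1 p.2 := by
  rintro ⟨d, t⟩ k hk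
  -- Finitely many eigenvalues lie below `t`, so they all lie below some `t - 2 * δ`.
  obtain ⟨δ, hδ, hcnt⟩ : ∃ δ > 0, cnt d t ≤ cnt d (t - 2 * δ) := by
    have hev : ∀ᶠ δ : ℝ in nhdsWithin 0 (Set.Ioi 0), ∀ j,
        (jac_isHermitian d).eigenvalues j < t → (jac_isHermitian d).eigenvalues j < t - 2 * δ := by
      rw [Filter.eventually_all]
      intro j
      by_cases hj : (jac_isHermitian d).eigenvalues j < t
      · have hc : Filter.Tendsto (fun δ : ℝ => t - 2 * δ) (nhdsWithin 0 (Set.Ioi 0)) (nhds t) := by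
          have : ContinuousAt (fun δ : ℝ => t - 2 * δ) 0 := by fun_prop
          simpa using this.tendsto.mono_left nhdsWithin_le_nhds
        filter_upwards [hc.eventually_const_lt hj] with δ h _ using h
      · simp [hj]
    obtain ⟨δ, h1, h2⟩ := (hev.and self_mem_nhdsWithin).exists
    refine ⟨δ, h2, Finset.card_le_card fun j hj => ?_⟩
    simp only [Finset.mem_filter, Finset.mem_univ, true_and] at hj ⊢
    exact h1 j hj
  filter_upwards [Metric.ball_mem_nhds (d, t) hδ] with p hp
  refine lt_of_lt_of_le hk (hcnt.trans ?_)
  have := cnt_le_cnt_add p.1 d p.2 (t - 2 * δ) ∅ fun i _ => by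
    rw [Metric.mem_ball, Prod.dist_eq, max_lt_iff] at hp
    have h1 := (dist_le_pi_dist p.1 d i).trans_lt hp.1
    have h2 := hp.2
    rw [Real.dist_eq, abs_lt] at h1 h2
    linarith [h1.1, h1.2, h2.1, h2.2]
  simpa using this

theorem measurable_cnt {n : ℕ} : Measurable fun p : (Fin n → ℝ) × ℝ => cnt p.1 p.2 :=
  lowerSemicontinuous_cnt.measurable

theorem cnt_le {n : ℕ} (d : Fin n → ℝ) (t : ℝ) : cnt d t ≤ n :=
  (Finset.card_filter_le _ _).trans_eq (Finset.card_fin n)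

theorem cnt_sub_cnt_neg {n : ℕ} (d : Fin n → ℝ) {t : ℝ} (ht : 0 ≤ t) :
    (cnt d t : ℝ) - cnt d (-t) = ∑ j, if -t ≤ (jac_isHermitian d).eigenvalues j ∧
      (jac_isHermitian d).eigenvalues j < t then (1 : ℝ) else 0 := by
  simp only [cnt, Finset.card_filter, Nat.cast_sum, Nat.cast_ite, Nat.cast_one, Nat.cast_zero]
  rw [← Finset.sum_sub_distrib]
  refine Finset.sum_congr rfl fun j _ => ?_
  grind

-- Unfolding `cnt` during unification is very expensive, and no longer needed.
attribute [irreducible] cnt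

/-! ### Transfer matrices -/

/-- The diagonal of `H_n(x) - E`, listed in reverse order so that the expansion of the determinant
along the first row follows the recursion of the transfer matrices. -/
def diagSeq (lam : ℝ) (v : ℝ → ℝ) (α E : ℝ) (n : ℕ) (x : ℝ) : Fin n → ℝ := fun i =>
  lam * v (x + ((n - 1 - (i : ℕ) : ℕ) : ℝ) * α) - E

theorem diagSeq_succ (lam : ℝ) (v : ℝ → ℝ) (α E : ℝ) (n : ℕ) (x : ℝ) :
    (fun i : Fin n => diagSeq lam v α E (n + 1) x i.succ) = diagSeq lam v α E n x := by
  funext i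
  have : n + 1 - 1 - ((i : ℕ) + 1) = n - 1 - (i : ℕ) := by omega
  simp only [diagSeq, Fin.val_succ, this]

/-- The first column of `M_{n+1}` consists of the determinants of `E - H_{n+1}` and `E - H_n`. -/
theorem transferMat_entries (lam : ℝ) (v : ℝ → ℝ) (α E x : ℝ) (n : ℕ) :
    transferMat lam v α E x (n + 1) 0 0 = (-1) ^ (n + 1) * (jac (diagSeq lam v α E (n + 1) x)).det ∧
    transferMat lam v α E x (n + 1) 1 0 = (-1) ^ n * (jac (diagSeq lam v α E n x)).det := by
  induction n with
  | zero => simp [transferMat, jac, diagSeq]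
  | succ n ih =>
    obtain ⟨h0, h1⟩ := ih
    have e0 : transferMat lam v α E x (n + 1 + 1) 0 0
        = (E - lam * v (x + ((n + 1 : ℕ) : ℝ) * α)) * transferMat lam v α E x (n + 1) 0 0
          - transferMat lam v α E x (n + 1) 1 0 := by
      rw [transferMat]
      simp [Matrix.mul_apply, Fin.sum_univ_two]
      ring
    have e1 : transferMat lam v α E x (n + 1 + 1) 1 0 = transferMat lam v α E x (n + 1) 0 0 := by
      rw [transferMat]
      simp [Matrix.mul_apply, Fin.sum_univ_two]
    refine ⟨?_, e1.trans h0⟩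
    have hd : diagSeq lam v α E (n + 1 + 1) x 0 = lam * v (x + ((n + 1 : ℕ) : ℝ) * α) - E := by
      simp [diagSeq]
    have h2 := diagSeq_succ lam v α E (n + 1) x
    have h3 := diagSeq_succ lam v α E n x
    rw [← h2] at h3
    rw [e0, h0, h1, det_jac_succ_succ, hd, h2, h3]
    ring

theorem det_transferMat (lam : ℝ) (v : ℝ → ℝ) (α E x : ℝ) (n : ℕ) :
    (transferMat lam v α E x n).det = 1 := by
  induction n with
  | zero => simp [transferMat]
  | succ n ih => rw [transferMat, Matrix.det_mul, ih]; simp [Matrix.det_fin_two]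

theorem abs_entry_le_matNorm (M : Matrix (Fin 2) (Fin 2) ℝ) (i j : Fin 2) :
    |M i j| ≤ matNorm M := by
  rw [matNorm, ← Real.sqrt_sq_eq_abs]
  apply Real.sqrt_le_sqrt
  exact (Finset.single_le_sum (f := fun j => M i j ^ 2) (fun _ _ => sq_nonneg _)
    (Finset.mem_univ j)).trans (Finset.single_le_sum (f := fun i => ∑ j, M i j ^ 2)
      (fun _ _ => Finset.sum_nonneg fun _ _ => sq_nonneg _) (Finset.mem_univ i))

theorem one_le_matNorm {M : Matrix (Fin 2) (Fin 2) ℝ} (h : M.det = 1) : 1 ≤ matNorm M := by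
  rw [matNorm, Real.one_le_sqrt]
  rw [Matrix.det_fin_two] at h
  simp only [Fin.sum_univ_two]
  nlinarith [sq_nonneg (M 0 0 - M 1 1), sq_nonneg (M 0 1 + M 1 0)]

theorem matNorm_le {M : Matrix (Fin 2) (Fin 2) ℝ} {C : ℝ} (hC : ∀ i j, |M i j| ≤ C) :
    matNorm M ≤ 2 * C := by
  have h0 : 0 ≤ C := (abs_nonneg _).trans (hC 0 0)
  rw [matNorm]
  apply Real.sqrt_le_iff.2 ⟨by linarith, ?_⟩
  have h : ∀ i j, M i j ^ 2 ≤ C ^ 2 := fun i j => sq_le_sq' (abs_le.1 (hC i j)).1 (abs_le.1 (hC i j)).2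
  simp only [Fin.sum_univ_two]
  nlinarith [h 0 0, h 0 1, h 1 0, h 1 1]

theorem map_fract_of_periodic {v : ℝ → ℝ} (hper : ∀ x : ℝ, v (x + 1) = v x) (x : ℝ) :
    v (Int.fract x) = v x := by
  have hv : Function.Periodic v 1 := hper
  have := hv.sub_int_mul_eq (x := x) ⌊x⌋
  rwa [mul_one] at this

/-- `v` is measurable because it is a Lipschitz function of the fractional part. -/
theorem measurable_of_sawtooth {γm γp : ℝ} {v : ℝ → ℝ} (hγm : 0 < γm) (hγp : 0 < γp)
    (hper : ∀ x : ℝ, v (x + 1) = v x)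
    (hmono : ∀ x y : ℝ, 0 ≤ x → x ≤ y → y < 1 →
      γm * (y - x) ≤ v y - v x ∧ v y - v x ≤ γp * (y - x)) : Measurable v := by
  have hL : LipschitzOnWith ⟨γp, hγp.le⟩ v (Set.Ico 0 1) := by
    refine LipschitzOnWith.of_dist_le_mul fun x hx y hy => ?_
    wlog hxy : x ≤ y generalizing x y
    · rw [dist_comm, dist_comm x]
      exact this y hy x hx (le_of_not_ge hxy)
    have h := hmono x y hx.1 hxy hy.2
    have hm : 0 ≤ γm * (y - x) := mul_nonneg hγm.le (by linarith)
    rw [dist_comm, dist_comm x, Real.dist_eq, Real.dist_eq, abs_of_nonneg (by linarith),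
      abs_of_nonneg (by linarith)]
    exact h.2
  obtain ⟨g, hg, hgv⟩ := hL.extend_real
  have : v = fun x => g (Int.fract x) := by
    funext x
    rw [← hgv ⟨Int.fract_nonneg x, Int.fract_lt_one x⟩]
    exact (map_fract_of_periodic hper x).symm
  rw [this]
  exact hg.continuous.measurable.comp measurable_fract

theorem abs_le_of_sawtooth {γm γp : ℝ} {v : ℝ → ℝ} (hγm : 0 < γm)
    (hper : ∀ x : ℝ, v (x + 1) = v x) (hv0 : v 0 = 0)
    (hmono : ∀ x y : ℝ, 0 ≤ x → x ≤ y → y < 1 →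
      γm * (y - x) ≤ v y - v x ∧ v y - v x ≤ γp * (y - x)) (hγp : 0 < γp) (x : ℝ) :
    |v x| ≤ γp := by
  rw [← map_fract_of_periodic hper x]
  have h0 := Int.fract_nonneg x
  have h1 := Int.fract_lt_one x
  have h := hmono 0 _ le_rfl h0 h1
  rw [hv0] at h
  have hm := mul_nonneg hγm.le h0
  rw [abs_le]
  constructor <;> nlinarith

theorem measurable_diagSeq {v : ℝ → ℝ} (hv : Measurable v) (lam α E : ℝ) (n : ℕ) :
    Measurable (diagSeq lam v α E n) := by
  refine measurable_pi_iff.2 fun i => ?_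
  unfold diagSeq
  fun_prop

theorem measurable_transferMat {v : ℝ → ℝ} (hv : Measurable v) (lam α E : ℝ) (n : ℕ)
    (i j : Fin 2) : Measurable fun x => transferMat lam v α E x n i j := by
  induction n generalizing i j with
  | zero => simp [transferMat]
  | succ n ih =>
    have h0 := fun j => ih 0 j
    have h1 := fun j => ih 1 j
    fin_cases i
    · have : ∀ x, transferMat lam v α E x (n + 1) 0 j = (E - lam * v (x + (n : ℝ) * α)) *
          transferMat lam v α E x n 0 j - transferMat lam v α E x n 1 j := fun x => by
        simp [transferMat, Matrix.mul_apply, Fin.sum_univ_two]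
        ring
      simp only [Fin.zero_eta, this]
      have := h0 j
      have := h1 j
      fun_prop
    · have : ∀ x, transferMat lam v α E x (n + 1) 1 j = transferMat lam v α E x n 0 j := fun x => by
        simp [transferMat, Matrix.mul_apply, Fin.sum_univ_two]
      simp only [Fin.mk_one, this]
      exact h0 j

theorem exists_bound_transferMat {v : ℝ → ℝ} {B : ℝ} (hB : ∀ x, |v x| ≤ B) (lam α E : ℝ) (n : ℕ) :
    ∃ C, ∀ x i j, |transferMat lam v α E x n i j| ≤ C := by
  induction n with
  | zero =>
    refine ⟨1, fun x i j => ?_⟩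
    fin_cases i <;> fin_cases j <;> simp [transferMat]
  | succ n ih =>
    obtain ⟨C, hC⟩ := ih
    have hC0 : 0 ≤ C := (abs_nonneg _).trans (hC 0 0 0)
    have hB0 : 0 ≤ B := (abs_nonneg _).trans (hB 0)
    refine ⟨(|E| + |lam| * B) * C + C, fun x i j => ?_⟩
    have hp : 0 ≤ (|E| + |lam| * B) * C := by positivity
    fin_cases i
    · have : transferMat lam v α E x (n + 1) 0 j = (E - lam * v (x + (n : ℝ) * α)) *
          transferMat lam v α E x n 0 j - transferMat lam v α E x n 1 j := by
        simp [transferMat, Matrix.mul_apply, Fin.sum_univ_two]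
        ring
      simp only [Fin.zero_eta, this]
      refine (abs_sub _ _).trans (add_le_add ?_ (hC x 1 j))
      rw [abs_mul]
      refine mul_le_mul ((abs_sub _ _).trans ?_) (hC x 0 j) (abs_nonneg _) (by positivity)
      rw [abs_mul]
      gcongr
      exact hB _
    · have : transferMat lam v α E x (n + 1) 1 j = transferMat lam v α E x n 0 j := by
        simp [transferMat, Matrix.mul_apply, Fin.sum_univ_two]
      simp only [Fin.mk_one, this]
      exact (hC x 0 j).trans (by linarith)

theorem integrable_log_matNorm {v : ℝ → ℝ} (hv : Measurable v) {B : ℝ} (hB : ∀ x, |v x| ≤ B)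
    (lam α E : ℝ) (n : ℕ) :
    IntegrableOn (fun x => Real.log (matNorm (transferMat lam v α E x n))) (Set.Ioc 0 1) := by
  obtain ⟨C, hC⟩ := exists_bound_transferMat hB lam α E n
  refine Measure.integrableOn_of_bounded (M := Real.log (2 * C)) (by simp) ?_ ?_
  · refine Measurable.aestronglyMeasurable ?_
    unfold matNorm
    refine Real.measurable_log.comp (Measurable.sqrt ?_)
    exact Finset.measurable_sum _ fun i _ => Finset.measurable_sum _ fun j _ =>
      (measurable_transferMat hv lam α E n i j).pow_const 2
  · refine Filter.Eventually.of_forall fun x => ?_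
    have h1 := one_le_matNorm (det_transferMat lam v α E x n)
    rw [Real.norm_of_nonneg (Real.log_nonneg h1)]
    exact Real.log_le_log (by linarith) (matNorm_le (hC x))

theorem integral_log_matNorm_nonneg (lam : ℝ) (v : ℝ → ℝ) (α E : ℝ) (n : ℕ) :
    0 ≤ ∫ x in (0:ℝ)..1, Real.log (matNorm (transferMat lam v α E x n)) :=
  intervalIntegral.integral_nonneg zero_le_one fun x _ =>
    Real.log_nonneg (one_le_matNorm (det_transferMat lam v α E x n))

/-! ### The Wegner-type estimate -/

/-- A shift by `ε` that does not cross an integer raises `v` by at least `γm * ε`. -/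
theorem shift_lower_bound {γm γp : ℝ} {v : ℝ → ℝ}
    (hper : ∀ x : ℝ, v (x + 1) = v x)
    (hmono : ∀ x y : ℝ, 0 ≤ x → x ≤ y → y < 1 →
      γm * (y - x) ≤ v y - v x ∧ v y - v x ≤ γp * (y - x)) {y ε : ℝ} (hε : 0 ≤ ε)
    (h : Int.fract y < 1 - ε) : v y + γm * ε ≤ v (y + ε) := by
  have h0 := Int.fract_nonneg y
  have hf : Int.fract (y + ε) = Int.fract y + ε := by
    rw [Int.fract_eq_iff]
    refine ⟨by linarith, by linarith, ⌊y⌋, ?_⟩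
    rw [Int.fract]
    ring
  have := (hmono (Int.fract y) (Int.fract y + ε) h0 (by linarith) (by linarith)).1
  rw [← map_fract_of_periodic hper y, ← map_fract_of_periodic hper (y + ε), hf]
  linarith

/-- Indicator function of the points whose fractional part is at least `1 - ε`. -/
def nearInt (ε y : ℝ) : ℝ := if 1 - ε ≤ Int.fract y then 1 else 0

theorem measurable_nearInt (ε : ℝ) : Measurable (nearInt ε) :=
  Measurable.ite (measurableSet_le measurable_const measurable_fract) measurable_const
    measurable_const

theorem intervalIntegrable_of_bdd {f : ℝ → ℝ} (hf : Measurable f) {C : ℝ} (hC : ∀ x, |f x| ≤ C)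
    (a b : ℝ) : IntervalIntegrable f volume a b := by
  rw [intervalIntegrable_iff]
  exact Measure.integrableOn_of_bounded (M := C) (by simp [Set.uIoc])
    hf.aestronglyMeasurable (Filter.Eventually.of_forall hC)

theorem abs_nearInt_le (ε y : ℝ) : |nearInt ε y| ≤ 1 := by
  unfold nearInt
  split_ifs <;> simp

theorem integral_nearInt {ε : ℝ} (h0 : 0 ≤ ε) (h1 : ε ≤ 1) (a : ℝ) :
    ∫ x in (0:ℝ)..1, nearInt ε (x + a) = ε := by
  have hp : Function.Periodic (nearInt ε) 1 := fun x => by simp [nearInt]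
  rw [intervalIntegral.integral_comp_add_right, add_comm 1 a, zero_add,
    hp.intervalIntegral_add_eq a 0, zero_add,
    ← intervalIntegral.integral_add_adjacent_intervals
      (intervalIntegrable_of_bdd (measurable_nearInt ε) (abs_nearInt_le ε) 0 (1 - ε))
      (intervalIntegrable_of_bdd (measurable_nearInt ε) (abs_nearInt_le ε) (1 - ε) 1)]
  have e1 : ∫ x in (0:ℝ)..(1 - ε), nearInt ε x = ∫ x in (0:ℝ)..(1 - ε), (0:ℝ) := by
    refine intervalIntegral.integral_congr_Ioo_of_le (by linarith) fun x hx => ?_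
    have : Int.fract x = x := Int.fract_eq_self.2 ⟨hx.1.le, by linarith [hx.2]⟩
    simp [nearInt, this, lt_sub_iff_add_lt.1 hx.2]
  have e2 : ∫ x in (1 - ε)..(1:ℝ), nearInt ε x = ∫ x in (1 - ε)..(1:ℝ), (1:ℝ) := by
    refine intervalIntegral.integral_congr_Ioo_of_le (by linarith) fun x hx => ?_
    have : Int.fract x = x := Int.fract_eq_self.2 ⟨by linarith [hx.1], hx.2⟩
    simp [nearInt, this, hx.1.le]
  rw [e1, e2]
  simp

theorem measurable_cnt_diagSeq {v : ℝ → ℝ} (hv : Measurable v) (lam α E : ℝ) (n : ℕ) :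
    Measurable fun p : ℝ × ℝ => (cnt (diagSeq lam v α E n p.1) p.2 : ℝ) := by
  have h : Measurable fun p : ℝ × ℝ => (diagSeq lam v α E n p.1, p.2) :=
    ((measurable_diagSeq hv lam α E n).comp measurable_fst).prodMk measurable_snd
  have hcnt : Measurable fun p : ℝ × ℝ => cnt (diagSeq lam v α E n p.1) p.2 :=
    measurable_cnt.comp h
  have hcast : Measurable fun k : ℕ => (k : ℝ) := Measurable.of_discrete
  exact hcast.comp hcnt

/-- The mean number of eigenvalues of `H_n(x)` in `[E - t, E + t)` is at most `n * (2t / (λ γm))`: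
apply `cnt_le_cnt_add` to `x` and `x + ε` with `ε = 2t / (λ γm)`, and average over a period. -/
theorem integral_cnt_sub_le {lam γm γp : ℝ} {v : ℝ → ℝ} (hlam : 0 < lam) (hγm : 0 < γm)
    (hper : ∀ x : ℝ, v (x + 1) = v x)
    (hmono : ∀ x y : ℝ, 0 ≤ x → x ≤ y → y < 1 →
      γm * (y - x) ≤ v y - v x ∧ v y - v x ≤ γp * (y - x)) (hv : Measurable v)
    (α E : ℝ) (n : ℕ) {t : ℝ} (ht : 0 ≤ t) (ht' : t ≤ lam * γm / 2) :
    ∫ x in (0:ℝ)..1, ((cnt (diagSeq lam v α E n x) t : ℝ) - cnt (diagSeq lam v α E n x) (-t))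
      ≤ n * (2 * t / (lam * γm)) := by
  set d := diagSeq lam v α E n with hd
  set ε := 2 * t / (lam * γm) with hε
  have hc : 0 < lam * γm := mul_pos hlam hγm
  have hε0 : 0 ≤ ε := by positivity
  have hε1 : ε ≤ 1 := by rw [hε, div_le_one hc]; linarith
  have hm : ∀ s, Measurable fun x => (cnt (d x) s : ℝ) := fun s =>
    (measurable_cnt_diagSeq hv lam α E n).comp (measurable_id.prodMk measurable_const)
  have hb : ∀ s x, |(cnt (d x) s : ℝ)| ≤ n := fun s x => by
    rw [abs_of_nonneg (Nat.cast_nonneg _)]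
    exact_mod_cast cnt_le _ _
  have hi : ∀ s, IntervalIntegrable (fun x => (cnt (d x) s : ℝ)) volume 0 1 := fun s =>
    intervalIntegrable_of_bdd (hm s) (hb s) 0 1
  have hpt : ∀ x, (cnt (d (x + ε)) t : ℝ) ≤ cnt (d x) (-t) +
      ∑ i : Fin n, nearInt ε (x + ((n - 1 - (i : ℕ) : ℕ) : ℝ) * α) := fun x => by
    have := cnt_le_cnt_add (d x) (d (x + ε)) (-t) t
      (Finset.univ.filter fun i : Fin n =>
        1 - ε ≤ Int.fract (x + ((n - 1 - (i : ℕ) : ℕ) : ℝ) * α)) fun i hi => by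
      simp only [Finset.mem_filter, Finset.mem_univ, true_and, not_le] at hi
      have h1 := mul_le_mul_of_nonneg_left (shift_lower_bound hper hmono hε0 hi) hlam.le
      have h2 : lam * (γm * ε) = 2 * t := by rw [hε]; field_simp
      simp only [hd, diagSeq, add_right_comm x ε]
      linarith
    have h' : (cnt (d (x + ε)) t : ℝ) ≤ cnt (d x) (-t) + (Finset.card (Finset.univ.filter
      fun i : Fin n => 1 - ε ≤ Int.fract (x + ((n - 1 - (i : ℕ) : ℕ) : ℝ) * α)) : ℝ) := by
      exact_mod_cast this
    simpa [nearInt, Finset.sum_boole] using h'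
  have hp : Function.Periodic (fun x => (cnt (d x) t : ℝ)) 1 := fun x => by
    have : d (x + 1) = d x := by
      funext i
      simp only [hd, diagSeq, add_right_comm x 1, hper]
    simp only [this]
  have hshift : ∫ x in (0:ℝ)..1, (cnt (d (x + ε)) t : ℝ) = ∫ x in (0:ℝ)..1, (cnt (d x) t : ℝ) := by
    rw [intervalIntegral.integral_comp_add_right (fun x => (cnt (d x) t : ℝ)), add_comm 1 ε,
      zero_add, hp.intervalIntegral_add_eq ε 0, zero_add]
  have hiJ : ∀ i ∈ (Finset.univ : Finset (Fin n)), IntervalIntegrable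
      (fun x => nearInt ε (x + ((n - 1 - (i : ℕ) : ℕ) : ℝ) * α)) volume 0 1 := fun i _ =>
    intervalIntegrable_of_bdd ((measurable_nearInt ε).comp (measurable_id.add_const _))
      (fun x => abs_nearInt_le _ _) 0 1
  have hmain := intervalIntegral.integral_mono zero_le_one
    (intervalIntegrable_of_bdd ((hm t).comp (measurable_id.add_const ε)) (fun x => hb t _) 0 1)
    ((hi (-t)).add (IntervalIntegrable.sum _ hiJ)) (fun x => by simpa using hpt x)
  have hsum : ∫ x in (0:ℝ)..1, ∑ i : Fin n, nearInt ε (x + ((n - 1 - (i : ℕ) : ℕ) : ℝ) * α)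
      = n * ε := by
    rw [intervalIntegral.integral_finsetSum hiJ]
    simp [integral_nearInt hε0 hε1]
  have hadd : ∫ x in (0:ℝ)..1, ((cnt (d x) (-t) : ℝ) +
      ∑ i : Fin n, nearInt ε (x + ((n - 1 - (i : ℕ) : ℕ) : ℝ) * α)) =
      (∫ x in (0:ℝ)..1, (cnt (d x) (-t) : ℝ)) + n * ε := by
    rw [intervalIntegral.integral_add (hi (-t)), hsum]
    simpa only [Finset.sum_fn] using IntervalIntegrable.sum _ hiJ
  rw [intervalIntegral.integral_sub (hi t) (hi (-t)), ← hshift]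
  have : ∫ x in (0:ℝ)..1, (cnt (d (x + ε)) t : ℝ) ≤ ∫ x in (0:ℝ)..1, ((cnt (d x) (-t) : ℝ) +
      ∑ i : Fin n, nearInt ε (x + ((n - 1 - (i : ℕ) : ℕ) : ℝ) * α)) := by
    simpa using hmain
  linarith

/-! ### Integrating the logarithm -/

/-- Layer-cake bound for the logarithm. The bound `m` on `|μ|` is kept separate from `|μ|` so that
`m → 0` shows the integral to be infinite when `μ = 0`. -/
theorem ofReal_log_sub_log_le {R m μ : ℝ} (hR : 0 < R) (hm : 0 < m) (hμ : |μ| ≤ m) :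
    ENNReal.ofReal (Real.log R - Real.log m) ≤
      ∫⁻ t in Set.Ioc 0 R, ENNReal.ofReal ((if -t ≤ μ ∧ μ < t then (1 : ℝ) else 0) / t) := by
  rcases le_or_gt R m with h | h
  · rw [ENNReal.ofReal_of_nonpos (by linarith [Real.log_le_log hR h])]
    exact zero_le
  have h1 : ENNReal.ofReal (Real.log R - Real.log m) =
      ∫⁻ t in Set.Ioc m R, ENNReal.ofReal (t⁻¹) := by
    rw [← Real.log_div hR.ne' hm.ne', ← integral_inv_of_pos hm hR,
      intervalIntegral.integral_of_le h.le, ofReal_integral_eq_lintegral_ofReal]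
    · exact (intervalIntegral.intervalIntegrable_inv (fun x hx => by
        rw [Set.uIcc_of_le h.le] at hx
        exact (hm.trans_le hx.1).ne') continuousOn_id).1
    · filter_upwards [ae_restrict_mem measurableSet_Ioc] with t ht
      exact inv_nonneg.2 (by linarith [ht.1])
  rw [h1]
  refine (setLIntegral_mono' measurableSet_Ioc fun t ht => ?_).trans
    (lintegral_mono_set (Set.Ioc_subset_Ioc_left hm.le))
  have hb := abs_le.1 hμ
  rw [if_pos ⟨by linarith [ht.1, hb.1], by linarith [ht.1, hb.2]⟩, one_div]

theorem measurable_window (μ : ℝ) : Measurable fun t : ℝ =>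
    ENNReal.ofReal ((if -t ≤ μ ∧ μ < t then (1 : ℝ) else 0) / t) := by
  refine ENNReal.measurable_ofReal.comp (Measurable.div ?_ measurable_id)
  exact Measurable.ite ((measurableSet_le measurable_neg measurable_const).inter
    (measurableSet_lt measurable_const measurable_id)) measurable_const measurable_const

/-- Sum of the layer-cake bounds over the eigenvalues. Finiteness of the integral excludes the
eigenvalue `0`, for which `Real.log` would take its junk value. -/
theorem log_abs_det_jac_ge {n : ℕ} (d : Fin n → ℝ) {R : ℝ} (hR : 0 < R)
    (hF : ∫⁻ t in Set.Ioc 0 R, ENNReal.ofReal (((cnt d t : ℝ) - cnt d (-t)) / t) ≠ ⊤) :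
    n * Real.log R -
      (∫⁻ t in Set.Ioc 0 R, ENNReal.ofReal (((cnt d t : ℝ) - cnt d (-t)) / t)).toReal
      ≤ Real.log |(jac d).det| ∧ (jac d).det ≠ 0 := by
  set μ := (jac_isHermitian d).eigenvalues with hμ
  set f : Fin n → ENNReal := fun j =>
    ∫⁻ t in Set.Ioc 0 R, ENNReal.ofReal ((if -t ≤ μ j ∧ μ j < t then (1 : ℝ) else 0) / t) with hf
  have hsum : ∫⁻ t in Set.Ioc 0 R, ENNReal.ofReal (((cnt d t : ℝ) - cnt d (-t)) / t)
      = ∑ j, f j := by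
    rw [hf, ← lintegral_finsetSum _ fun j _ => measurable_window (μ j)]
    refine setLIntegral_congr_fun measurableSet_Ioc fun t ht => ?_
    rw [cnt_sub_cnt_neg d ht.1.le, Finset.sum_div, ENNReal.ofReal_sum_of_nonneg]
    intro j _
    exact div_nonneg (by split_ifs <;> simp) ht.1.le
  rw [hsum] at hF ⊢
  have hfin : ∀ j, f j ≠ ⊤ := fun j => ENNReal.sum_ne_top.1 hF j (Finset.mem_univ j)
  have hlog : ∀ j m, 0 < m → |μ j| ≤ m → Real.log R - Real.log m ≤ (f j).toReal :=
    fun j m hm hj => (ENNReal.ofReal_le_iff_le_toReal (hfin j)).1 (ofReal_log_sub_log_le hR hm hj)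
  have hne : ∀ j, μ j ≠ 0 := fun j hj => by
    have := hlog j (R * Real.exp (-((f j).toReal + 1))) (by positivity) (by
      rw [hj, abs_zero]; positivity)
    rw [Real.log_mul hR.ne' (Real.exp_ne_zero _), Real.log_exp] at this
    linarith
  have hdet : (jac d).det = ∏ j, μ j := by
    simpa using (jac_isHermitian d).det_eq_prod_eigenvalues
  refine ⟨?_, by rw [hdet]; exact Finset.prod_ne_zero_iff.2 fun j _ => hne j⟩
  rw [hdet, Finset.abs_prod, Real.log_prod fun j _ => abs_ne_zero.2 (hne j),
    ENNReal.toReal_sum fun j _ => hfin j]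
  have : ∑ j : Fin n, (Real.log R - (f j).toReal) ≤ ∑ j, Real.log |μ j| :=
    Finset.sum_le_sum fun j _ => by
      linarith [hlog j |μ j| (abs_pos.2 (hne j)) le_rfl]
  simpa [Finset.sum_sub_distrib] using this

theorem lintegral_lintegral_cnt_le {lam γm γp : ℝ} {v : ℝ → ℝ} (hlam : 0 < lam) (hγm : 0 < γm)
    (hper : ∀ x : ℝ, v (x + 1) = v x)
    (hmono : ∀ x y : ℝ, 0 ≤ x → x ≤ y → y < 1 →
      γm * (y - x) ≤ v y - v x ∧ v y - v x ≤ γp * (y - x)) (hv : Measurable v)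
    (α E : ℝ) (n : ℕ) :
    ∫⁻ x in Set.Ioc 0 1, ∫⁻ t in Set.Ioc 0 (lam * γm / 2),
      ENNReal.ofReal (((cnt (diagSeq lam v α E n x) t : ℝ) - cnt (diagSeq lam v α E n x) (-t)) / t)
      ≤ ENNReal.ofReal n := by
  have hc : 0 < lam * γm := mul_pos hlam hγm
  set d := diagSeq lam v α E n with hd
  have hm := measurable_cnt_diagSeq hv lam α E n
  have hm1 : ∀ s, Measurable fun x => (cnt (d x) s : ℝ) := fun s =>
    hm.comp (measurable_id.prodMk measurable_const)
  have hm2 : Measurable fun p : ℝ × ℝ => ((cnt (d p.1) p.2 : ℝ) - cnt (d p.1) (-p.2)) := by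
    have : Measurable fun p : ℝ × ℝ => (p.1, -p.2) := by fun_prop
    exact hm.sub (hm.comp this)
  rw [lintegral_lintegral_swap]
  · have hb : ∀ t ∈ Set.Ioc 0 (lam * γm / 2), ∫⁻ x in Set.Ioc 0 1,
        ENNReal.ofReal (((cnt (d x) t : ℝ) - cnt (d x) (-t)) / t)
        ≤ ENNReal.ofReal (n * (2 / (lam * γm))) := fun t ht => by
      have hmt : Measurable fun x => ((cnt (d x) t : ℝ) - cnt (d x) (-t)) :=
        (hm1 t).sub (hm1 (-t))
      have hbd : ∀ x s, (cnt (d x) s : ℝ) ≤ n := fun x s => by exact_mod_cast cnt_le _ _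
      have hpos : ∀ x s, (0 : ℝ) ≤ cnt (d x) s := fun x s => Nat.cast_nonneg _
      have hnn : ∀ x, 0 ≤ ((cnt (d x) t : ℝ) - cnt (d x) (-t)) := fun x => by
        rw [cnt_sub_cnt_neg _ ht.1.le]
        exact Finset.sum_nonneg fun j _ => by split_ifs <;> simp
      have hdiv := (intervalIntegrable_of_bdd hmt (C := n) (fun x => by
        rw [abs_of_nonneg (hnn x)]
        linarith [hbd x t, hpos x (-t)]) 0 1).div_const t
      rw [← ofReal_integral_eq_lintegral_ofReal hdiv.1
        (Filter.Eventually.of_forall fun x => div_nonneg (hnn x) ht.1.le)]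
      apply ENNReal.ofReal_le_ofReal
      rw [integral_div, ← intervalIntegral.integral_of_le zero_le_one, div_le_iff₀ ht.1]
      refine (integral_cnt_sub_le hlam hγm hper hmono hv α E n ht.1.le ht.2).trans_eq ?_
      ring
    refine (setLIntegral_mono' measurableSet_Ioc hb).trans ?_
    rw [setLIntegral_const, Real.volume_Ioc, ← ENNReal.ofReal_mul (by positivity)]
    apply ENNReal.ofReal_le_ofReal
    apply le_of_eq
    field_simp
    ring
  · exact (ENNReal.measurable_ofReal.comp (hm2.div measurable_snd)).aemeasurable

/-- The main estimate, for each `n` separately and without the factor `1 - ρ(α)`. -/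
theorem integral_log_matNorm_ge {lam γm γp : ℝ} {v : ℝ → ℝ} (hlam : 0 < lam) (hγm : 0 < γm)
    (hγp : 0 < γp) (hper : ∀ x : ℝ, v (x + 1) = v x) (hv0 : v 0 = 0)
    (hmono : ∀ x y : ℝ, 0 ≤ x → x ≤ y → y < 1 →
      γm * (y - x) ≤ v y - v x ∧ v y - v x ≤ γp * (y - x)) (α E : ℝ) (n : ℕ) :
    (n + 1 : ℕ) * (Real.log (lam * γm / 2) - 1)
      ≤ ∫ x in (0:ℝ)..1, Real.log (matNorm (transferMat lam v α E x (n + 1))) := by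
  have hv := measurable_of_sawtooth hγm hγp hper hmono
  have hR : 0 < lam * γm / 2 := by positivity
  have hle := lintegral_lintegral_cnt_le hlam hγm hper hmono hv α E (n + 1)
  set d := diagSeq lam v α E (n + 1) with hd
  set F : ℝ → ENNReal := fun x => ∫⁻ t in Set.Ioc 0 (lam * γm / 2),
      ENNReal.ofReal (((cnt (d x) t : ℝ) - cnt (d x) (-t)) / t) with hF
  have hm := measurable_cnt_diagSeq hv lam α E (n + 1)
  have hFm : Measurable F := by
    have h1 : Measurable fun p : ℝ × ℝ => (p.1, -p.2) := by fun_prop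
    exact (ENNReal.measurable_ofReal.comp
      ((hm.sub (hm.comp h1)).div measurable_snd)).lintegral_prod_right'
  have hFtop : ∫⁻ x in Set.Ioc 0 1, F x ≠ ⊤ := ne_top_of_le_ne_top ENNReal.ofReal_ne_top hle
  have hFint : Integrable (fun x => (F x).toReal) (volume.restrict (Set.Ioc 0 1)) :=
    integrable_toReal_of_lintegral_ne_top hFm.aemeasurable hFtop
  have hFae : ∀ᵐ x ∂(volume.restrict (Set.Ioc (0:ℝ) 1)), F x < ⊤ :=
    ae_lt_top' hFm.aemeasurable hFtop
  have hFle : ∫ x in Set.Ioc (0:ℝ) 1, (F x).toReal ≤ (n + 1 : ℕ) := by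
    rw [integral_toReal hFm.aemeasurable hFae]
    exact ENNReal.toReal_le_of_le_ofReal (Nat.cast_nonneg _) hle
  have hmono' : ∫ x in Set.Ioc (0:ℝ) 1, ((n + 1 : ℕ) * Real.log (lam * γm / 2) - (F x).toReal)
      ≤ ∫ x in Set.Ioc (0:ℝ) 1, Real.log (matNorm (transferMat lam v α E x (n + 1))) := by
    refine integral_mono_ae ((integrable_const _).sub hFint) (integrable_log_matNorm hv
      (abs_le_of_sawtooth hγm hper hv0 hmono hγp) lam α E (n + 1)) ?_
    filter_upwards [hFae] with x hx
    obtain ⟨h1, h2⟩ := log_abs_det_jac_ge (d x) hR hx.ne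
    refine h1.trans (Real.log_le_log (abs_pos.2 h2) ?_)
    have h3 := abs_entry_le_matNorm (transferMat lam v α E x (n + 1)) 0 0
    rwa [(transferMat_entries lam v α E x n).1, abs_mul, abs_pow, abs_neg, abs_one, one_pow,
      one_mul] at h3
  rw [integral_sub (integrable_const _) hFint] at hmono'
  rw [intervalIntegral.integral_of_le zero_le_one]
  simp only [integral_const, MeasurableSet.univ, measureReal_restrict_apply, Set.univ_inter,
    Real.volume_real_Ioc, sub_zero, max_eq_left zero_le_one, one_smul] at hmono'
  linarith

/-! ### Bounds for `ρ(α)` -/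

theorem gaussIter_irrational {α : ℝ} (hα : Irrational α) (k : ℕ) : Irrational (gaussIter α k) := by
  induction k with
  | zero => exact hα.sub_intCast _
  | succ k ih =>
    rw [gaussIter, one_div]
    exact ih.inv.sub_intCast _

theorem one_le_cfA {α : ℝ} (hα : Irrational α) (k : ℕ) : 1 ≤ cfA α k := by
  have hirr := gaussIter_irrational hα k
  have h01 : 0 ≤ gaussIter α k ∧ gaussIter α k < 1 := by
    cases k <;> exact ⟨Int.fract_nonneg _, Int.fract_lt_one _⟩
  have hpos : 0 < gaussIter α k := lt_of_le_of_ne h01.1 hirr.ne_zero.symm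
  have : (1 : ℤ) ≤ ⌊1 / gaussIter α k⌋ := by
    rw [Int.le_floor, Int.cast_one, le_div_iff₀ hpos]
    linarith [h01.2]
  rw [cfA]
  omega

theorem cfDen_succ_ge {α : ℝ} (hα : Irrational α) (k : ℕ) : cfDen α k ≤ cfDen α (k + 1) := by
  cases k with
  | zero => exact one_le_cfA hα 0
  | succ k =>
    rw [cfDen]
    nlinarith [one_le_cfA hα (k + 1)]

theorem cfRho_mem {α : ℝ} (hα : Irrational α) : 0 ≤ cfRho α ∧ cfRho α ≤ 1 / 2 := by
  have h0 : ∀ k, (0 : ℝ) ≤ (cfDen α k : ℝ) / (cfDen α (k + 2) : ℝ) := fun k => by positivity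
  have h1 : ∀ k, (cfDen α k : ℝ) / (cfDen α (k + 2) : ℝ) ≤ 1 / 2 := fun k => by
    have h2 : 2 * cfDen α k ≤ cfDen α (k + 2) := by
      rw [cfDen]
      nlinarith [one_le_cfA hα (k + 1), cfDen_succ_ge hα k]
    have h3 : (2 : ℝ) * cfDen α k ≤ cfDen α (k + 2) := by exact_mod_cast h2
    exact div_le_of_le_mul₀ (Nat.cast_nonneg _) (by norm_num) (by linarith)
  constructor
  · exact le_liminf_of_le (isBoundedUnder_of ⟨1 / 2, h1⟩).isCoboundedUnder_ge
      (Filter.Eventually.of_forall h0)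
  · exact liminf_le_of_le (isBoundedUnder_of ⟨0, h0⟩) fun b hb => by
      obtain ⟨k, hk⟩ := hb.exists
      exact hk.trans (h1 k)

/-- lower bound for the Lyapunov exponent. -/
theorem lyapunov_lower_bound
    (α lam γm γp : ℝ) (v : ℝ → ℝ)
    (hα : Irrational α) (hlam : 0 < lam) (hγm : 0 < γm) (hγp : 0 < γp)
    (hper : ∀ x : ℝ, v (x + 1) = v x) (hv0 : v 0 = 0)
    (hmono : ∀ x y : ℝ, 0 ≤ x → x ≤ y → y < 1 →
      γm * (y - x) ≤ v y - v x ∧ v y - v x ≤ γp * (y - x)) :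
    ∀ E : ℝ,
      max (Real.log lam - Real.log (2 * Real.exp 1 / ((1 - cfRho α) * γm))) 0
        ≤ lyap lam v α E := by
  intro E
  obtain ⟨hρ0, hρ1⟩ := cfRho_mem hα
  refine le_ciInf fun n => max_le ?_ ?_
  · have hn : (0 : ℝ) < (n : ℕ) := by exact_mod_cast n.pos
    obtain ⟨m, hm⟩ : ∃ m, (n : ℕ) = m + 1 := ⟨(n : ℕ) - 1, by have := n.pos; omega⟩
    have h := integral_log_matNorm_ge hlam hγm hγp hper hv0 hmono α E m
    rw [← hm] at h
    rw [one_div, inv_mul_eq_div, le_div_iff₀ hn]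
    refine le_trans ?_ h
    rw [mul_comm]
    refine mul_le_mul_of_nonneg_left ?_ hn.le
    have hlog : Real.log (1 - cfRho α) ≤ 0 := Real.log_nonpos (by linarith) (by linarith)
    rw [Real.log_div (by positivity) (mul_pos (by linarith) hγm).ne',
      Real.log_mul two_ne_zero (Real.exp_ne_zero _), Real.log_exp,
      Real.log_mul (by linarith) hγm.ne', Real.log_div (by positivity) two_ne_zero,
      Real.log_mul hlam.ne' hγm.ne']
    linarith
  · exact mul_nonneg (by positivity) (integral_log_matNorm_nonneg lam v α E n)

end
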